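/- Let U be an open subset of the Euclidean space ℝ³ (EuclideanSpace ℝ (Fin 3)) and let f : ℝ³ → ℝ be twice continuously differentiable on U and harmonic on U, i.e. the trace of its Hessian vanishes at every point of U. Then at every point x ∈ U where the gradient ∇f(x) ≠ 0, the function x ↦ ‖∇f(x)‖ is differentiable and its gradient satisfies ‖∇‖∇f‖(x)‖² ≤ (2/3)·‖Hess f(x)‖², where ‖Hess f(x)‖² = ∑_{i,j} (∂ᵢ∂ⱼ f(x))² is the squared Frobenius norm of the Hessian matrix of f at x. -/

import Mathlib

/-!
The Hessian of a harmonic function is a trace-free symmetric operator, and `|∇f| ∇|∇f|` is its value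
at the vector `∇f`. If eigenvalues `λ₁, …, λₙ` sum to zero, Cauchy–Schwarz applied to
`λₖ = -∑_{i ≠ k} λᵢ` gives `λₖ² ≤ (n - 1) / n * ∑ λᵢ²`, so that the operator norm of the Hessian is
controlled by its Frobenius norm with the constant `(n - 1) / n` instead of `1`.
-/

open Module InnerProductSpace
open scoped Gradient

lemma card_mul_sq_le_of_sum_eq_zero {ι R : Type*} [CommRing R] [LinearOrder R]
    [IsStrictOrderedRing R] {s : Finset ι} {a : ι → R} (ha : ∑ i ∈ s, a i = 0) {k : ι}
    (hk : k ∈ s) : s.card * a k ^ 2 ≤ (s.card - 1) * ∑ i ∈ s, a i ^ 2 := by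
  classical
  have hak : a k = -∑ i ∈ s.erase k, a i := by
    rw [← Finset.add_sum_erase s a hk] at ha
    exact eq_neg_of_add_eq_zero_left ha
  have cauchy_schwarz : a k ^ 2 ≤ (s.card - 1) * ∑ i ∈ s.erase k, a i ^ 2 := by
    rw [hak, neg_sq, ← Finset.cast_card_erase_of_mem hk]
    exact sq_sum_le_card_mul_sum_sq
  rw [← Finset.add_sum_erase s (fun i => a i ^ 2) hk]
  linarith

section SymmetricOperator

variable {𝕜 E ι : Type*} [RCLike 𝕜] [NormedAddCommGroup E] [InnerProductSpace 𝕜 E] [Fintype ι]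
  {T : E →ₗ[𝕜] E}

lemma trace_comp_self_eq_sum_norm_sq (hT : T.IsSymmetric) (b : OrthonormalBasis ι 𝕜 E) :
    (T ∘ₗ T).trace 𝕜 E = ((∑ i, ‖T (b i)‖ ^ 2 : ℝ) : 𝕜) := by
  rw [LinearMap.trace_eq_sum_inner _ b, RCLike.ofReal_sum]
  congr! with i
  rw [LinearMap.comp_apply, ← hT, inner_self_eq_norm_sq_to_K, RCLike.ofReal_pow]

variable [FiniteDimensional 𝕜 E]

lemma sum_norm_sq_apply_eq_sum_sq_eigenvalues (hT : T.IsSymmetric) {n : ℕ}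
    (hn : finrank 𝕜 E = n) (b : OrthonormalBasis ι 𝕜 E) :
    ∑ i, ‖T (b i)‖ ^ 2 = ∑ i, hT.eigenvalues hn i ^ 2 := by
  have basis_independence := (trace_comp_self_eq_sum_norm_sq hT b).symm.trans
    (trace_comp_self_eq_sum_norm_sq hT (hT.eigenvectorBasis hn))
  rw [RCLike.ofReal_inj.mp basis_independence]
  simp [norm_smul]

lemma norm_sq_apply_eq_sum_sq_eigenvalues_mul (hT : T.IsSymmetric) {n : ℕ}
    (hn : finrank 𝕜 E = n) (v : E) :
    ‖T v‖ ^ 2 = ∑ i, hT.eigenvalues hn i ^ 2 * ‖(hT.eigenvectorBasis hn).repr v i‖ ^ 2 := by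
  rw [← (hT.eigenvectorBasis hn).repr.norm_map, EuclideanSpace.norm_sq_eq]
  simp [hT.eigenvectorBasis_apply_self_apply, mul_pow]

theorem finrank_mul_norm_sq_apply_le_of_trace_eq_zero (hT : T.IsSymmetric)
    (htr : T.trace 𝕜 E = 0) (b : OrthonormalBasis ι 𝕜 E) (v : E) :
    finrank 𝕜 E * ‖T v‖ ^ 2 ≤ (finrank 𝕜 E - 1) * (∑ i, ‖T (b i)‖ ^ 2) * ‖v‖ ^ 2 := by
  set c := hT.eigenvectorBasis rfl
  set μ := hT.eigenvalues rfl
  have sum_eigenvalues : ∑ i, μ i = 0 := by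
    rw [← hT.re_trace_eq_sum_eigenvalues rfl, htr, map_zero]
  have eigenvalue_le (k) : finrank 𝕜 E * μ k ^ 2 ≤ (finrank 𝕜 E - 1) * ∑ i, μ i ^ 2 := by
    simpa using card_mul_sq_le_of_sum_eq_zero sum_eigenvalues (Finset.mem_univ k)
  calc finrank 𝕜 E * ‖T v‖ ^ 2
      = ∑ k, finrank 𝕜 E * μ k ^ 2 * ‖c.repr v k‖ ^ 2 := by
        simp only [norm_sq_apply_eq_sum_sq_eigenvalues_mul hT rfl, Finset.mul_sum, mul_assoc, μ, c]
    _ ≤ ∑ k, (finrank 𝕜 E - 1) * (∑ i, μ i ^ 2) * ‖c.repr v k‖ ^ 2 :=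
        Finset.sum_le_sum fun k _ => mul_le_mul_of_nonneg_right (eigenvalue_le k) (sq_nonneg _)
    _ = (finrank 𝕜 E - 1) * (∑ i, ‖T (b i)‖ ^ 2) * ‖v‖ ^ 2 := by
        rw [← Finset.mul_sum, ← EuclideanSpace.norm_sq_eq, c.repr.norm_map,
          sum_norm_sq_apply_eq_sum_sq_eigenvalues hT rfl b]

end SymmetricOperator

section Gradient

lemma differentiableAt_fderiv {𝕜 E F : Type*} [NontriviallyNormedField 𝕜] [NormedAddCommGroup E]
    [NormedSpace 𝕜 E] [NormedAddCommGroup F] [NormedSpace 𝕜 F] {f : E → F} {x : E}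
    (hf : ContDiffAt 𝕜 2 f x) : DifferentiableAt 𝕜 (fderiv 𝕜 f) x :=
  (hf.fderiv_right (m := 1) one_add_one_eq_two.le).differentiableAt one_ne_zero

variable {E F ι : Type*} [NormedAddCommGroup E] [InnerProductSpace ℝ E] [CompleteSpace E]
  [NormedAddCommGroup F] [InnerProductSpace ℝ F] [CompleteSpace F] {f : E → ℝ} {x : E}

lemma hasGradientAt_norm_comp {G : E → F} {G' : E →L[ℝ] F} (hG : HasFDerivAt G G' x)
    (hx : G x ≠ 0) :
    HasGradientAt (fun y => ‖G y‖) (‖G x‖⁻¹ • G'.adjoint (G x)) x := by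
  have hsqrt := hG.norm_sq.sqrt (pow_ne_zero 2 (norm_ne_zero_iff.mpr hx))
  simp only [Real.sqrt_sq (norm_nonneg _)] at hsqrt
  refine hasGradientAt_iff_hasFDerivAt.mpr (hsqrt.congr_fderiv ?_)
  ext v
  simp [ContinuousLinearMap.adjoint_inner_left, mul_assoc]

lemma differentiableAt_gradient (hf : ContDiffAt ℝ 2 f x) : DifferentiableAt ℝ (∇ f) x :=
  (toDual ℝ E).symm.differentiableAt.comp x (differentiableAt_fderiv hf)

lemma inner_fderiv_gradient (h : DifferentiableAt ℝ (∇ f) x) (v w : E) :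
    inner ℝ (fderiv ℝ (∇ f) x v) w = fderiv ℝ (fun y => fderiv ℝ f y w) x v := by
  have fderiv_apply : (fun y => fderiv ℝ f y w) = fun y => inner ℝ (∇ f y) w :=
    funext fun y => inner_gradient_left.symm
  simp [fderiv_apply, fderiv_inner_apply ℝ h (differentiableAt_const w)]

lemma trace_fderiv_gradient [Fintype ι] (h : DifferentiableAt ℝ (∇ f) x)
    (b : OrthonormalBasis ι ℝ E) :
    (fderiv ℝ (∇ f) x : E →ₗ[ℝ] E).trace ℝ E =
      ∑ i, fderiv ℝ (fun y => fderiv ℝ f y (b i)) x (b i) := by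
  simp_rw [LinearMap.trace_eq_sum_inner _ b, ← inner_fderiv_gradient h, real_inner_comm (b _),
    ContinuousLinearMap.coe_coe]

lemma norm_sq_fderiv_gradient_apply [Fintype ι] (h : DifferentiableAt ℝ (∇ f) x)
    (b : OrthonormalBasis ι ℝ E) (v : E) :
    ‖fderiv ℝ (∇ f) x v‖ ^ 2 = ∑ i, fderiv ℝ (fun y => fderiv ℝ f y (b i)) x v ^ 2 := by
  simp_rw [← inner_fderiv_gradient h, b.sum_sq_inner_left]

lemma isSymmetric_fderiv_gradient (hf : ContDiffAt ℝ 2 f x) :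
    (fderiv ℝ (∇ f) x : E →ₗ[ℝ] E).IsSymmetric := by
  intro v w
  have inner_eq_second_fderiv (v w : E) :
      inner ℝ (fderiv ℝ (∇ f) x v) w = fderiv ℝ (fderiv ℝ f) x v w := by
    rw [inner_fderiv_gradient (differentiableAt_gradient hf),
      fderiv_clm_apply (differentiableAt_fderiv hf) (differentiableAt_const w)]
    simp
  have hsymm : IsSymmSndFDerivAt ℝ f x := hf.isSymmSndFDerivAt (by simp)
  rw [ContinuousLinearMap.coe_coe, inner_eq_second_fderiv, hsymm.eq, ← inner_eq_second_fderiv,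
    real_inner_comm]

lemma gradient_norm_gradient (hf : ContDiffAt ℝ 2 f x) (hx : ∇ f x ≠ 0) :
    ∇ (fun y => ‖∇ f y‖) x = ‖∇ f x‖⁻¹ • fderiv ℝ (∇ f) x (∇ f x) := by
  rw [(hasGradientAt_norm_comp (differentiableAt_gradient hf).hasFDerivAt hx).gradient,
    (isSymmetric_fderiv_gradient hf).isSelfAdjoint.adjoint_eq]

end Gradient

theorem stmt_1_general {E ι : Type*} [NormedAddCommGroup E] [InnerProductSpace ℝ E]
    [FiniteDimensional ℝ E] [Fintype ι] (b : OrthonormalBasis ι ℝ E) {f : E → ℝ} {x : E}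
    (hf : ContDiffAt ℝ 2 f x)
    (hharm : ∑ i, fderiv ℝ (fun y => fderiv ℝ f y (b i)) x (b i) = 0) (hx : ∇ f x ≠ 0) :
    DifferentiableAt ℝ (fun y => ‖∇ f y‖) x ∧
      ‖∇ (fun y => ‖∇ f y‖) x‖ ^ 2 ≤ ((Fintype.card ι - 1) / Fintype.card ι) *
        ∑ i, ∑ j, (fderiv ℝ (fun y => fderiv ℝ f y (b j)) x (b i)) ^ 2 := by
  have hgrad := differentiableAt_gradient hf
  refine ⟨hgrad.norm ℝ hx, ?_⟩
  have card_pos : (0 : ℝ) < Fintype.card ι := by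
    have : Nontrivial E := nontrivial_of_ne _ _ hx
    rw [← finrank_eq_card_basis b.toBasis]
    exact_mod_cast finrank_pos
  have operator_bound := finrank_mul_norm_sq_apply_le_of_trace_eq_zero
    (isSymmetric_fderiv_gradient hf) ((trace_fderiv_gradient hgrad b).trans hharm) b (∇ f x)
  rw [finrank_eq_card_basis b.toBasis] at operator_bound
  have norm_sq_eq : ‖∇ (fun y => ‖∇ f y‖) x‖ ^ 2 =
      ‖fderiv ℝ (∇ f) x (∇ f x)‖ ^ 2 / ‖∇ f x‖ ^ 2 := by
    rw [gradient_norm_gradient hf hx, norm_smul, norm_inv, norm_norm, inv_mul_eq_div, div_pow]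
  simp_rw [norm_sq_eq, ← norm_sq_fderiv_gradient_apply hgrad b]
  rw [div_le_iff₀ (pow_pos (norm_pos_iff.mpr hx) 2), div_mul_eq_mul_div, div_mul_eq_mul_div,
    le_div_iff₀' card_pos]
  exact operator_bound

/-- Refined Kato inequality in Euclidean 3-space: if `f` is `C²` and harmonic on an
open set `U ⊆ ℝ³`, then at every point of `U` where the gradient of `f` does not
vanish, the function `x ↦ ‖∇f(x)‖` is differentiable and
`‖∇‖∇f‖‖² ≤ (2/3)·‖Hess f‖²`, where `‖Hess f‖²` is the squared Frobenius norm of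
the Hessian matrix. -/
theorem stmt_1 (U : Set (EuclideanSpace ℝ (Fin 3))) (hU : IsOpen U)
    (f : EuclideanSpace ℝ (Fin 3) → ℝ)
    (hf : ContDiffOn ℝ 2 f U)
    (hharm : ∀ x ∈ U,
      ∑ i : Fin 3, fderiv ℝ (fun y => fderiv ℝ f y (EuclideanSpace.single i 1)) x
        (EuclideanSpace.single i 1) = 0) :
    ∀ x ∈ U, gradient f x ≠ 0 →
      DifferentiableAt ℝ (fun y => ‖gradient f y‖) x ∧
      ‖gradient (fun y => ‖gradient f y‖) x‖ ^ 2
        ≤ (2/3) * ∑ i : Fin 3, ∑ j : Fin 3,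
            (fderiv ℝ (fun y => fderiv ℝ f y (EuclideanSpace.single j 1)) x
              (EuclideanSpace.single i 1)) ^ 2 := by
  intro x hx hgx
  simpa [show (3 - 1 : ℝ) = 2 by norm_num] using stmt_1_general (EuclideanSpace.basisFun (Fin 3) ℝ)
    (hf.contDiffAt (hU.mem_nhds hx)) (by simpa using hharm x hx) hgx
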